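/- arXiv:0904.1380 — 3 statements merged into one kernel-verified Lean document; each statement's English description precedes it below -/
import Mathlib

section
/- Let q ∈ ℤ and let G(q) = ⟨s₁, s₂, f | s₁² = f, s₂³ = f, (s₁s₂)⁷ = f^q⟩. For k, l ∈ ℤ set g = s₁s₂⁻¹s₁s₂s₁s₂⁻¹s₁s₂⁻¹s₁s₂ · f^k and h = s₂⁻¹s₁s₂s₁s₂⁻¹s₁s₂s₁s₂s₁ · f^l. Then Subgroup.closure {g,h} = ⊤ if and only if Subgroup.closure {f^{k+l+5}, f^{2k-20q+121}, f^{6k+6l+12q-40}, f^{-7k-14l-97q+511}} = Subgroup.zpowers f. -/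
/-!
Write `H` for the subgroup generated by `g` and `h`.

Modulo the central subgroup `⟨f⟩`, the elements `g` and `h` generate the triangle group
`Δ(2,3,7)`: explicit words in `g` and `h` evaluate to both standard generators
(`triangle_gen`). Hence `H⟨f⟩ = G(q)`, and since `f` is central, `H` contains every commutator.
So `H = G(q)` can be tested in the abelianization, which is cyclic, generated by
`x = s₁s₂⁻¹`, with `s₁ = x³`, `s₂ = x²`, `f = x⁶` and `x ^ (35 - 6q) = 1`. There `g` and `h`
become `x ^ u` and `x ^ v` with `u = 13 + 6k`, `v = 17 + 6l`. Put `w = 35 - 6q`.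

Both implications come from comparing the four exponents `e₁, …, e₄` of `f` with `u, v, w`:
`6e₁ = u + v`, `6e₂ = 2u + 20w`, `6e₃ = 6u + 6v - 12w`, `6e₄ = -7u - 14v + 97w`.
If the `f ^ eᵢ` generate `⟨f⟩`, these identities put `x⁶`, and then `x = (x⁶) ^ (6 - q)`, in the
image of `H`. Conversely, because `e₂` is odd the numbers `u, v, w` lie in the ideal
`I = (e₁, …, e₄)` of `ℤ`, so `G(q)` maps to `ℤ/I` by `s₁ ↦ 3`, `s₂ ↦ 2`, `f ↦ 6`, with `g` and
`h` in the kernel; if `H = G(q)` then `1 ∈ I`, and `f` is a product of powers of the `f ^ eᵢ`.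
-/

/-- Relators of G(q) = ⟨s₁,s₂,f | s₁² = f, s₂³ = f, (s₁s₂)⁷ = f^q⟩ on the generators
s₁ = of 0, s₂ = of 1, f = of 2. -/
def seifertRels (q : ℤ) : Set (FreeGroup (Fin 3)) :=
  {FreeGroup.of 0 ^ 2 * (FreeGroup.of 2)⁻¹,
   FreeGroup.of 1 ^ 3 * (FreeGroup.of 2)⁻¹,
   (FreeGroup.of 0 * FreeGroup.of 1) ^ 7 * FreeGroup.of 2 ^ (-q)}

/-- The fundamental group of a Seifert manifold over S²(2,3,7). -/
abbrev Sft (q : ℤ) := PresentedGroup (seifertRels q)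

/-- The generator s₁. -/
def S₁ (q : ℤ) : Sft q := PresentedGroup.of 0

/-- The generator s₂. -/
def S₂ (q : ℤ) : Sft q := PresentedGroup.of 1

/-- The central element f (the class of the regular fiber). -/
def F (q : ℤ) : Sft q := PresentedGroup.of 2

/-! ### The triangle group -/

/-- In any quotient of the triangle group `Δ(2,3,7)`, a subgroup containing the two given words
contains both standard generators: writing `g`, `h` for these words, one has
`b⁻¹ = g·(g h g⁻¹ h⁻¹ g h)·(h g)` and `a = g h⁻¹ g⁻¹ h g h⁻¹ g⁻¹ g⁻¹ h⁻¹`. -/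
theorem triangle_gen {Q : Type*} [Group Q] (a b : Q) (ha : a ^ 2 = 1) (hb : b ^ 3 = 1)
    (hab : (a * b) ^ 7 = 1) (K : Subgroup Q)
    (hg : a * b⁻¹ * a * b * a * b⁻¹ * a * b⁻¹ * a * b ∈ K)
    (hh : b⁻¹ * a * b * a * b⁻¹ * a * b * a * b * a ∈ K) : a ∈ K ∧ b ∈ K := by
  obtain ⟨c, hc⟩ : ∃ c, c = b⁻¹ := ⟨_, rfl⟩
  rw [← hc] at hg hh
  have bc : b * c = 1 := by simp [hc]
  have cb : c * b = 1 := by simp [hc]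
  have aa : a * a = 1 := by rw [← sq, ha]
  have bb : b * b = c := by
    rw [hc, eq_inv_iff_mul_eq_one, ← hb, pow_succ, sq]
  have cc : c * c = b := by
    rw [← bb, mul_assoc, bb, bc, mul_one]
  have ia : a⁻¹ = a := inv_eq_of_mul_eq_one_left aa
  have ib : b⁻¹ = c := hc.symm
  have ic : c⁻¹ = b := by rw [hc, inv_inv]
  have aa' : ∀ x, a * (a * x) = x := fun x => by rw [← mul_assoc, aa, one_mul]
  have bc' : ∀ x, b * (c * x) = x := fun x => by rw [← mul_assoc, bc, one_mul]
  have cb' : ∀ x, c * (b * x) = x := fun x => by rw [← mul_assoc, cb, one_mul]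
  have bb' : ∀ x, b * (b * x) = c * x := fun x => by rw [← mul_assoc, bb]
  have cc' : ∀ x, c * (c * x) = b * x := fun x => by rw [← mul_assoc, cc]
  -- The relation `(ab)⁷ = 1` as length-nonincreasing rewriting rules.
  have r1 : b * (a * (b * (a * (b * (a * b))))) = a * (c * (a * (c * (a * (c * a))))) := by
    have : b * (a * (b * (a * (b * (a * b))))) * (a * (b * (a * (b * (a * (b * a)))))) = 1 := by
      have : b * (a * (b * (a * (b * (a * b))))) * (a * (b * (a * (b * (a * (b * a)))))) =
        a⁻¹ * (a * b) ^ 7 * a := by simp [pow_succ, mul_assoc]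
      rw [this, hab]; simp
    rw [eq_inv_of_mul_eq_one_left this]
    simp [ia, ib, mul_assoc]
  have r2 : a * (b * (a * (b * (a * (b * a))))) = c * (a * (c * (a * (c * (a * c))))) := by
    have h := congrArg (·⁻¹) r1
    simp only [mul_inv_rev, ia, ib, ic, mul_assoc] at h
    exact h.symm
  have r1' : ∀ x, b * (a * (b * (a * (b * (a * (b * x)))))) =
      a * (c * (a * (c * (a * (c * (a * x)))))) := fun x => by
    simpa only [mul_assoc] using congrArg (· * x) r1
  have r2' : ∀ x, a * (b * (a * (b * (a * (b * (a * x)))))) =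
      c * (a * (c * (a * (c * (a * (c * x)))))) := fun x => by
    simpa only [mul_assoc] using congrArg (· * x) r2
  have r4' : ∀ x, c * (a * (c * (a * (c * (a * (c * (a * x))))))) =
      a * (b * (a * (b * (a * (b * x))))) := fun x => by
    rw [← r2', aa']
  have r6' : ∀ x, a * (c * (a * (c * (a * (c * (a * (b * x))))))) =
      b * (a * (b * (a * (b * (a * (c * x)))))) := fun x => by
    rw [← r1', bb']
  generalize hgg : a * c * a * b * a * c * a * c * a * b = g at hg
  generalize hhh : c * a * b * a * c * a * b * a * b * a = h at hh
  have hgi : g⁻¹ = c * (a * (b * (a * (b * (a * (c * (a * (b * a)))))))) := by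
    rw [← hgg]; simp only [mul_inv_rev, ia, ib, ic]
  have hhi : h⁻¹ = a * (c * (a * (c * (a * (b * (a * (c * (a * b)))))))) := by
    rw [← hhh]; simp only [mul_inv_rev, ia, ib, ic]
  have e1 : g * (g * h * g⁻¹ * h⁻¹ * g * h) * (h * g) * 1 = c * 1 := by
    rw [hgi, hhi, ← hgg, ← hhh]
    simp only [mul_assoc, aa', bb', cc', bc', cb', r1', r2', r4']
  have e2 : g * h⁻¹ * g⁻¹ * h * g * h⁻¹ * g⁻¹ * g⁻¹ * h⁻¹ * 1 = a * 1 := by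
    rw [hgi, hhi, ← hgg, ← hhh]
    simp only [mul_assoc, aa', bb', cc', bc', cb', r2', r4', r6']
  rw [mul_one, mul_one] at e1 e2
  have hgi := K.inv_mem hg
  have hhi := K.inv_mem hh
  constructor
  · rw [← e2]
    repeat' first | assumption | apply K.mul_mem
  · rw [← ic, ← e1]
    apply K.inv_mem
    repeat' first | assumption | apply K.mul_mem

/-! ### The group `G(q)` and its abelianization -/

theorem sft_rel1 (q : ℤ) : S₁ q ^ 2 = F q := by
  have h : PresentedGroup.mk (seifertRels q) (FreeGroup.of 0 ^ 2 * (FreeGroup.of 2)⁻¹) = 1 :=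
    PresentedGroup.one_of_mem (by simp [seifertRels])
  simp only [map_mul, map_pow, map_inv, mul_inv_eq_one] at h
  exact h

theorem sft_rel2 (q : ℤ) : S₂ q ^ 3 = F q := by
  have h : PresentedGroup.mk (seifertRels q) (FreeGroup.of 1 ^ 3 * (FreeGroup.of 2)⁻¹) = 1 :=
    PresentedGroup.one_of_mem (by simp [seifertRels])
  simp only [map_mul, map_pow, map_inv, mul_inv_eq_one] at h
  exact h

theorem sft_rel3 (q : ℤ) : (S₁ q * S₂ q) ^ 7 = F q ^ q := by
  have h : PresentedGroup.mk (seifertRels q)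
      ((FreeGroup.of 0 * FreeGroup.of 1) ^ 7 * FreeGroup.of 2 ^ (-q)) = 1 :=
    PresentedGroup.one_of_mem (by simp [seifertRels])
  simp only [map_mul, map_pow, map_inv, map_zpow, zpow_neg, mul_inv_eq_one] at h
  exact h

theorem sft_closure (q : ℤ) : Subgroup.closure {S₁ q, S₂ q} = ⊤ := by
  rw [eq_top_iff, ← PresentedGroup.closure_range_of (seifertRels q), Subgroup.closure_le]
  have h1 : S₁ q ∈ Subgroup.closure {S₁ q, S₂ q} := Subgroup.subset_closure (by simp)
  have h2 : S₂ q ∈ Subgroup.closure {S₁ q, S₂ q} := Subgroup.subset_closure (by simp)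
  rintro _ ⟨i, rfl⟩
  fin_cases i
  · exact h1
  · exact h2
  · change F q ∈ _
    rw [← sft_rel1]
    exact Subgroup.pow_mem _ h1 2

theorem F_mem_center (q : ℤ) : F q ∈ Subgroup.center (Sft q) := by
  have h : Subgroup.closure {S₁ q, S₂ q} ≤ Subgroup.centralizer {F q} := by
    rw [Subgroup.closure_le]
    rintro x (rfl | rfl) <;> rw [SetLike.mem_coe, Subgroup.mem_centralizer_singleton_iff]
    · rw [← sft_rel1]; exact (Commute.self_pow _ 2).eq
    · rw [← sft_rel2]; exact (Commute.self_pow _ 3).eq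
  rw [sft_closure] at h
  rw [Subgroup.mem_center_iff]
  intro x
  exact Subgroup.mem_centralizer_singleton_iff.1 (h (Subgroup.mem_top x))

open scoped commutatorElement in
/-- A subgroup of `G(q)` that contains `g` and `h` contains every commutator,
since together with the central element `f` it generates `G(q)`. -/
theorem commutator_le_of_mem (q k l : ℤ) (H : Subgroup (Sft q))
    (hg : S₁ q * (S₂ q)⁻¹ * S₁ q * S₂ q * S₁ q * (S₂ q)⁻¹ * S₁ q * (S₂ q)⁻¹ *
      S₁ q * S₂ q * F q ^ k ∈ H)
    (hh : (S₂ q)⁻¹ * S₁ q * S₂ q * S₁ q * (S₂ q)⁻¹ * S₁ q * S₂ q * S₁ q *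
      S₂ q * S₁ q * F q ^ l ∈ H) : commutator (Sft q) ≤ H := by
  have hZ := F_mem_center q
  have hle : Subgroup.zpowers (F q) ≤ Subgroup.center (Sft q) := by
    rwa [Subgroup.zpowers_le]
  have : (Subgroup.zpowers (F q)).Normal := ⟨fun n hn x => by
    rwa [Subgroup.mem_center_iff.1 (hle hn) x, mul_inv_cancel_right]⟩
  let π := QuotientGroup.mk' (Subgroup.zpowers (F q))
  have hπ : π (F q) = 1 :=
    (QuotientGroup.eq_one_iff _).2 (Subgroup.mem_zpowers _)
  have key := triangle_gen (π (S₁ q)) (π (S₂ q))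
    (by rw [← map_pow, sft_rel1, hπ]) (by rw [← map_pow, sft_rel2, hπ])
    (by rw [← map_mul, ← map_pow, sft_rel3, map_zpow, hπ, one_zpow]) (H.map π)
    (by
      have := Subgroup.mem_map_of_mem π hg
      simpa only [map_mul, map_inv, map_zpow, hπ, one_zpow, mul_one] using this)
    (by
      have := Subgroup.mem_map_of_mem π hh
      simpa only [map_mul, map_inv, map_zpow, hπ, one_zpow, mul_one] using this)
  have hmem : ∀ x, π x ∈ H.map π := by
    have h : Subgroup.closure {S₁ q, S₂ q} ≤ (H.map π).comap π := by
      rw [Subgroup.closure_le]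
      rintro x (rfl | rfl)
      · exact key.1
      · exact key.2
    rw [sft_closure] at h
    exact fun x => h (Subgroup.mem_top x)
  have hdec : ∀ x, ∃ y ∈ H, ∃ z ∈ Subgroup.center (Sft q), x = y * z := by
    intro x
    obtain ⟨y, hy, hxy⟩ := hmem x
    exact ⟨y, hy, y⁻¹ * x, hle (QuotientGroup.eq.1 hxy), by group⟩
  rw [commutator_def, Subgroup.commutator_le]
  intro x _ x' _
  obtain ⟨y, hy, z, hz, rfl⟩ := hdec x
  obtain ⟨y', hy', z', hz', rfl⟩ := hdec x'
  rw [Subgroup.mem_center_iff] at hz hz'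
  have : ⁅y * z, y' * z'⁆ = ⁅y, y'⁆ := by
    have e1 : (y * z) * (y' * z') = (y * y') * (z * z') := by
      rw [mul_assoc, ← mul_assoc z, ← hz y']; group
    have e2 : (y' * z') * (y * z) = (y' * y) * (z * z') := by
      rw [mul_assoc, ← mul_assoc z', ← hz' y, mul_assoc y, ← hz z']; group
    have e3 : ∀ s t : Sft q, ⁅s, t⁆ = (s * t) * (t * s)⁻¹ := fun s t => by
      rw [commutatorElement_def]; group
    rw [e3, e3 y, e1, e2]; group
  rw [this, commutatorElement_def]
  exact H.mul_mem (H.mul_mem (H.mul_mem hy hy') (H.inv_mem hy)) (H.inv_mem hy')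

/-- The abelianization of `G(q)` is cyclic: every generator is a power of `x = s₁s₂⁻¹`,
and `x ^ (35 - 6q) = 1`. -/
theorem exists_abelian_gen (q : ℤ) : ∃ x : Abelianization (Sft q),
    Abelianization.of (S₁ q) = x ^ (3 : ℤ) ∧ Abelianization.of (S₂ q) = x ^ (2 : ℤ) ∧
    Abelianization.of (F q) = x ^ (6 : ℤ) ∧ x ^ (35 - 6 * q) = 1 := by
  have r1 := congrArg Abelianization.of (sft_rel1 q)
  have r2 := congrArg Abelianization.of (sft_rel2 q)
  have r3 := congrArg Abelianization.of (sft_rel3 q)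
  simp only [map_pow, map_mul, map_zpow] at r1 r2 r3
  generalize Abelianization.of (S₁ q) = a at *
  generalize Abelianization.of (S₂ q) = b at *
  generalize Abelianization.of (F q) = c at *
  have h : a ^ 2 = b ^ 3 := r1.trans r2.symm
  have e1 : a = (a * b⁻¹) ^ (3 : ℤ) := by
    calc a = a ^ 3 * (a ^ 2)⁻¹ := by group
      _ = a ^ 3 * (b ^ 3)⁻¹ := by rw [h]
      _ = _ := by rw [mul_zpow, inv_zpow]; norm_cast
  have e2 : b = (a * b⁻¹) ^ (2 : ℤ) := by
    calc b = b ^ 3 * (b ^ 2)⁻¹ := by group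
      _ = a ^ 2 * (b ^ 2)⁻¹ := by rw [h]
      _ = _ := by rw [mul_zpow, inv_zpow]; norm_cast
  have e3 : c = (a * b⁻¹) ^ (6 : ℤ) := by
    rw [← r1]
    nth_rewrite 1 [e1]
    rw [← zpow_natCast, ← zpow_mul]; norm_num
  refine ⟨a * b⁻¹, e1, e2, e3, ?_⟩
  generalize a * b⁻¹ = x at *
  subst e1 e2 e3
  rw [← zpow_add, ← zpow_natCast, ← zpow_mul, ← zpow_mul] at r3
  rw [zpow_sub, ← r3]
  norm_num

/-- `G(q)` maps to the additive group of any commutative ring in which `6q = 35`, by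
`s₁ ↦ 3`, `s₂ ↦ 2`, `f ↦ 6`. -/
theorem exists_hom (q : ℤ) (R : Type) [CommRing R] (hR : (6 * q : R) = 35) :
    ∃ φ : Sft q →* Multiplicative R, (φ (S₁ q)).toAdd = 3 ∧ (φ (S₂ q)).toAdd = 2 ∧
      (φ (F q)).toAdd = 6 := by
  let v : Fin 3 → Multiplicative R :=
    ![Multiplicative.ofAdd 3, Multiplicative.ofAdd 2, Multiplicative.ofAdd 6]
  have hv : ∀ r ∈ seifertRels q, FreeGroup.lift v r = 1 := by
    rintro r (rfl | rfl | rfl)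
    · apply Multiplicative.toAdd.injective
      simp [v]; norm_num
    · apply Multiplicative.toAdd.injective
      simp [v]; norm_num
    · apply Multiplicative.toAdd.injective
      simp [v]
      linear_combination -hR
  exact ⟨PresentedGroup.toGroup hv, by simp [S₁, v], by simp [S₂, v], by simp [F, v]⟩

/-! ### The criterion -/

theorem stmt17 (q k l : ℤ) :
    let g := S₁ q * (S₂ q)⁻¹ * S₁ q * S₂ q * S₁ q * (S₂ q)⁻¹ * S₁ q * (S₂ q)⁻¹ *
      S₁ q * S₂ q * F q ^ k
    let h := (S₂ q)⁻¹ * S₁ q * S₂ q * S₁ q * (S₂ q)⁻¹ * S₁ q * S₂ q * S₁ q *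
      S₂ q * S₁ q * F q ^ l
    Subgroup.closure {g, h} = ⊤ ↔
      Subgroup.closure {F q ^ (k + l + 5), F q ^ (2 * k - 20 * q + 121),
          F q ^ (6 * k + 6 * l + 12 * q - 40),
          F q ^ (-7 * k - 14 * l - 97 * q + 511)} =
        Subgroup.zpowers (F q) := by
  intro g h
  constructor
  · intro hH
    apply le_antisymm
    · rw [Subgroup.closure_le]
      rintro _ (rfl | rfl | rfl | rfl) <;> exact Subgroup.zpow_mem_zpowers _ _
    rw [Subgroup.zpowers_le]
    let I : Ideal ℤ := Ideal.span {k + l + 5, 2 * k - 20 * q + 121,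
      6 * k + 6 * l + 12 * q - 40, -7 * k - 14 * l - 97 * q + 511}
    have i1 : k + l + 5 ∈ I := Ideal.subset_span (by simp)
    have i2 : 2 * k - 20 * q + 121 ∈ I := Ideal.subset_span (by simp)
    have i3 : 6 * k + 6 * l + 12 * q - 40 ∈ I := Ideal.subset_span (by simp)
    have z1 := Ideal.Quotient.eq_zero_iff_mem.2 i1
    have z2 := Ideal.Quotient.eq_zero_iff_mem.2 i2
    have z3 := Ideal.Quotient.eq_zero_iff_mem.2 i3
    simp only [map_add, map_sub, map_mul, map_ofNat] at z1 z2 z3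
    generalize hK : Ideal.Quotient.mk I k = K at *
    generalize hL : Ideal.Quotient.mk I l = L at *
    generalize hQ : Ideal.Quotient.mk I q = Q at *
    -- `e₃ - 6e₁ = -2w` and `e₂` is odd, so `w`, then `u`, then `v` vanish modulo `I`.
    have w2 : 2 * (35 - 6 * Q) = 0 := by linear_combination 6 * z1 - z3
    have w0 : 35 - 6 * Q = 0 := by
      linear_combination (35 - 6 * Q) * z2 - (K - 10 * Q + 60) * w2
    have u2 : 2 * (13 + 6 * K) = 0 := by linear_combination 6 * z2 - 20 * w0
    have u0 : 13 + 6 * K = 0 := by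
      linear_combination (13 + 6 * K) * z2 - (K - 10 * Q + 60) * u2
    have v0 : 17 + 6 * L = 0 := by linear_combination 6 * z1 - u0
    have hK' : (k : ℤ ⧸ I) = K := by rw [← hK]; simp
    have hL' : (l : ℤ ⧸ I) = L := by rw [← hL]; simp
    have hQ' : (q : ℤ ⧸ I) = Q := by rw [← hQ]; simp
    obtain ⟨φ, p1, p2, p3⟩ := exists_hom q (ℤ ⧸ I) (by rw [hQ']; linear_combination -w0)
    have hker : Subgroup.closure {g, h} ≤ φ.ker := by
      rw [Subgroup.closure_le]
      rintro x (rfl | rfl) <;> rw [SetLike.mem_coe, MonoidHom.mem_ker] <;>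
        apply Multiplicative.toAdd.injective
      · simp only [g, map_mul, map_inv, map_zpow, toAdd_mul, toAdd_inv, toAdd_zpow, toAdd_one,
          p1, p2, p3, zsmul_eq_mul, hK']
        linear_combination u0
      · simp only [h, map_mul, map_inv, map_zpow, toAdd_mul, toAdd_inv, toAdd_zpow, toAdd_one,
          p1, p2, p3, zsmul_eq_mul, hL']
        linear_combination v0
    rw [hH] at hker
    have t1 : φ (S₁ q) = 1 := hker (Subgroup.mem_top _)
    have t2 : φ (S₂ q) = 1 := hker (Subgroup.mem_top _)
    rw [t1, toAdd_one] at p1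
    rw [t2, toAdd_one] at p2
    have one_mem : (1 : ℤ) ∈ I := by
      rw [← Ideal.Quotient.eq_zero_iff_mem, map_one]
      linear_combination p2 - p1
    obtain ⟨c1, y1, hy1, E1⟩ := Ideal.mem_span_insert.1 one_mem
    obtain ⟨c2, y2, hy2, E2⟩ := Ideal.mem_span_insert.1 hy1
    obtain ⟨c3, y3, hy3, E3⟩ := Ideal.mem_span_insert.1 hy2
    obtain ⟨c4, E4⟩ := Ideal.mem_span_singleton'.1 hy3
    have m1 := Subgroup.subset_closure (G := Sft q) (k := {F q ^ (k + l + 5),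
      F q ^ (2 * k - 20 * q + 121), F q ^ (6 * k + 6 * l + 12 * q - 40),
      F q ^ (-7 * k - 14 * l - 97 * q + 511)})
    simp only [Set.insert_subset_iff, Set.singleton_subset_iff, SetLike.mem_coe] at m1
    generalize Subgroup.closure (G := Sft q) {F q ^ (k + l + 5),
      F q ^ (2 * k - 20 * q + 121), F q ^ (6 * k + 6 * l + 12 * q - 40),
      F q ^ (-7 * k - 14 * l - 97 * q + 511)} = N at *
    obtain ⟨m1, m2, m3, m4⟩ := m1
    rw [← zpow_one (F q), E1, E2, E3, ← E4, zpow_add _ (c1 * _), zpow_add _ (c2 * _),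
      zpow_add _ (c3 * _), zpow_mul' _ c1, zpow_mul' _ c2, zpow_mul' _ c3, zpow_mul' _ c4]
    exact N.mul_mem (N.zpow_mem m1 _) (N.mul_mem (N.zpow_mem m2 _)
      (N.mul_mem (N.zpow_mem m3 _) (N.zpow_mem m4 _)))
  · intro hN
    have mg : g ∈ Subgroup.closure {g, h} := Subgroup.subset_closure (by simp)
    have mh : h ∈ Subgroup.closure {g, h} := Subgroup.subset_closure (by simp)
    generalize Subgroup.closure {g, h} = H at *
    have hcomm : commutator (Sft q) ≤ H := commutator_le_of_mem q k l H mg mh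
    obtain ⟨x, x1, x2, x3, x4⟩ := exists_abelian_gen q
    have mg' := Subgroup.mem_map_of_mem Abelianization.of mg
    have mh' := Subgroup.mem_map_of_mem Abelianization.of mh
    have gx : Abelianization.of g = x ^ (13 + 6 * k) := by
      simp only [g, map_mul, map_inv, map_zpow, x1, x2, x3]
      simp only [← zpow_mul, ← zpow_neg, ← zpow_add]
      ring_nf
    have hx : Abelianization.of h = x ^ (17 + 6 * l) := by
      simp only [h, map_mul, map_inv, map_zpow, x1, x2, x3]
      simp only [← zpow_mul, ← zpow_neg, ← zpow_add]
      ring_nf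
    rw [gx] at mg'
    rw [hx] at mh'
    have comb : ∀ e A B C : ℤ, 6 * e = (13 + 6 * k) * A + (17 + 6 * l) * B + (35 - 6 * q) * C →
        F q ^ e ∈ (H.map Abelianization.of).comap Abelianization.of := by
      intro e A B C he
      rw [Subgroup.mem_comap, map_zpow, x3, ← zpow_mul, he, zpow_add, zpow_add, zpow_mul,
        zpow_mul, zpow_mul, x4, one_zpow, mul_one]
      exact Subgroup.mul_mem _ (Subgroup.zpow_mem _ mg' _) (Subgroup.zpow_mem _ mh' _)
    have hNle : Subgroup.zpowers (F q) ≤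
        (H.map Abelianization.of).comap Abelianization.of := by
      rw [← hN, Subgroup.closure_le]
      rintro _ (rfl | rfl | rfl | rfl)
      · exact comb _ 1 1 0 (by ring)
      · exact comb _ 2 0 20 (by ring)
      · exact comb _ 6 6 (-12) (by ring)
      · exact comb _ (-7) (-14) 97 (by ring)
    have x6 : x ^ (6 : ℤ) ∈ H.map Abelianization.of := by
      rw [← x3]; exact hNle (Subgroup.mem_zpowers _)
    have hxm : x ∈ H.map Abelianization.of := by
      have : x = (x ^ (6 : ℤ)) ^ (6 - q) := by
        rw [← zpow_mul, show 6 * (6 - q) = 1 + (35 - 6 * q) by ring, zpow_add, x4, mul_one,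
          zpow_one]
      rw [this]
      exact Subgroup.zpow_mem _ x6 _
    have hle : Subgroup.closure {S₁ q, S₂ q} ≤
        (H.map Abelianization.of).comap Abelianization.of := by
      rw [Subgroup.closure_le]
      rintro _ (rfl | rfl) <;> rw [SetLike.mem_coe, Subgroup.mem_comap]
      · rw [x1]; exact Subgroup.zpow_mem _ hxm _
      · rw [x2]; exact Subgroup.zpow_mem _ hxm _
    rw [sft_closure] at hle
    rw [eq_top_iff]
    intro y _
    obtain ⟨z, hz, hzy⟩ := hle (Subgroup.mem_top y)
    have hc : z⁻¹ * y ∈ commutator (Sft q) := QuotientGroup.eq.1 hzy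
    simpa using H.mul_mem hz (hcomm hc)
end

section
/- Let q ∈ ℤ and let G(q) = ⟨s₁, s₂, f | s₁² = f, s₂³ = f, (s₁s₂)⁷ = f^q⟩. Set g₀ = s₁s₂⁻¹s₁s₂s₁s₂⁻¹s₁s₂⁻¹s₁s₂ and h₀ = s₂⁻¹s₁s₂s₁s₂⁻¹s₁s₂s₁s₂s₁. Then the commutator satisfies [g₀, h₀] = (s₁s₂)⁴ · f^{2q-15}, where [g₀,h₀] = g₀h₀g₀⁻¹h₀⁻¹. In particular, in the quotient Δ(2,3,7) = ⟨s₁,s₂ | s₁², s₂³, (s₁s₂)⁷⟩ obtained by setting f = 1, one has [g₀, h₀] = (s₁s₂)⁴. -/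
/-- The word g₀ = s₁s₂⁻¹s₁s₂s₁s₂⁻¹s₁s₂⁻¹s₁s₂ in two letters. -/
def w₁ {G : Type*} [Group G] (x y : G) : G :=
  x * y⁻¹ * x * y * x * y⁻¹ * x * y⁻¹ * x * y

/-- The word h₀ = s₂⁻¹s₁s₂s₁s₂⁻¹s₁s₂s₁s₂s₁ in two letters. -/
def w₂ {G : Type*} [Group G] (x y : G) : G :=
  y⁻¹ * x * y * x * y⁻¹ * x * y * x * y * x

/-- Relators of the triangle group Δ(2,3,7) on generators s₁ = of 0, s₂ = of 1. -/
def triangleRels : Set (FreeGroup (Fin 2)) :=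
  {FreeGroup.of 0 ^ 2, FreeGroup.of 1 ^ 3, (FreeGroup.of 0 * FreeGroup.of 1) ^ 7}

section

variable {G : Type*} [Group G] {x y f : G}

/-- The commutator of the two words, reduced in the central extension `⟨x, y | x² = y³⟩` of
`ℤ/2 * ℤ/3`. -/
lemma comm_eq_word (hx : x ^ 2 = f) (hy : y ^ 3 = f) :
    w₁ x y * w₂ x y * (w₁ x y)⁻¹ * (w₂ x y)⁻¹ =
      (x * y⁻¹) * (x * y) ^ 4 * (x * y⁻¹) * (x * y) ^ 4 * (x * y⁻¹) * (x * y) * (f ^ 8)⁻¹ := by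
  have hxx : x * x = f := by rw [← hx, pow_two]
  have hyy : y * (y * y) = f := by rw [← hy, pow_three]
  have cx : x * f = f * x := by rw [← hx]; group
  have cy : y * f = f * y := by rw [← hy]; group
  have cx' : x * f⁻¹ = f⁻¹ * x := by rw [← hx]; group
  have cy' : y * f⁻¹ = f⁻¹ * y := by rw [← hy]; group
  have ix : x⁻¹ = f⁻¹ * x := by rw [← hx]; group
  have iy : y⁻¹ = f⁻¹ * (y * y) := by rw [← hy]; group
  have hxx' (t : G) : x * (x * t) = f * t := by rw [← mul_assoc, hxx]
  have hyy' (t : G) : y * (y * (y * t)) = f * t := by rw [← hyy]; group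
  have cxt (t : G) : x * (f * t) = f * (x * t) := by rw [← mul_assoc, cx, mul_assoc]
  have cyt (t : G) : y * (f * t) = f * (y * t) := by rw [← mul_assoc, cy, mul_assoc]
  have cxt' (t : G) : x * (f⁻¹ * t) = f⁻¹ * (x * t) := by rw [← mul_assoc, cx', mul_assoc]
  have cyt' (t : G) : y * (f⁻¹ * t) = f⁻¹ * (y * t) := by rw [← mul_assoc, cy', mul_assoc]
  -- These rules move `f` to the left and bring the rest to normal form in `ℤ/2 * ℤ/3`.
  simp only [w₁, w₂, mul_inv_rev, inv_inv, pow_succ, pow_zero, one_mul, mul_assoc, ix, iy, hyy,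
    hxx', hyy', cx, cy, cy', cxt, cyt, cxt', cyt',
    inv_mul_cancel_left, inv_mul_cancel, mul_one]

/-- The relation `(xy)⁷ = f^q` is used twice here, once for each of the two inner powers `(xy)⁶`
that appear after substituting `xy⁻¹ = (xy) x (xy) f⁻²`. -/
lemma word_collapse {q : ℤ} (hx : x ^ 2 = f) (hy : y ^ 3 = f) (ha : (x * y) ^ 7 = f ^ q) :
    (x * y⁻¹) * (x * y) ^ 4 * (x * y⁻¹) * (x * y) ^ 4 * (x * y⁻¹) * (x * y) =
      (x * y) ^ 4 * f ^ (2 * q - 7) := by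
  have cx : Commute f x := by rw [← hx]; exact (Commute.refl x).pow_left 2
  have cy : Commute f y := by rw [← hy]; exact (Commute.refl y).pow_left 3
  have ca : Commute f (x * y) := cx.mul_right cy
  have hy2 : y ^ 2 = f * y⁻¹ := by rw [← hy]; group
  have hb : x * y⁻¹ = (x * y) * x * (x * y) * f ^ (-2 : ℤ) := by
    have h : (x * y) * x * (x * y) = x * y⁻¹ * f ^ 2 := by
      calc (x * y) * x * (x * y) = x * (y * x ^ 2) * y := by simp only [pow_two, mul_assoc]
        _ = x * f * y ^ 2 := by rw [hx, ← cy.eq]; simp only [pow_two, mul_assoc]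
        _ = x * (f ^ 2 * y⁻¹) := by rw [hy2]; simp only [pow_two, mul_assoc]
        _ = x * y⁻¹ * f ^ 2 := by rw [(cy.inv_right.pow_left 2).eq, mul_assoc]
    rw [h]; group
  have hb' : x * y⁻¹ = x * (x * y)⁻¹ * x := by group
  have ha6 : (x * y) ^ 6 = (x * y)⁻¹ * f ^ q := by rw [← ha, pow_succ' _ 6, inv_mul_cancel_left]
  generalize x * y = a at *
  generalize x * y⁻¹ = b at *
  have hcent (n : ℤ) {u : G} (h : Commute f u) : f ^ n * u = u * f ^ n := (h.zpow_left n).eq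
  have fx (n : ℤ) (t : G) : f ^ n * (x * t) = x * (f ^ n * t) := by
    rw [← mul_assoc, hcent n cx, mul_assoc]
  have fp (n : ℤ) (k : ℕ) (t : G) : f ^ n * (a ^ k * t) = a ^ k * (f ^ n * t) := by
    rw [← mul_assoc, hcent n (ca.pow_right k), mul_assoc]
  have fi (n : ℤ) (t : G) : f ^ n * (a⁻¹ * t) = a⁻¹ * (f ^ n * t) := by
    rw [← mul_assoc, hcent n ca.inv_right, mul_assoc]
  calc b * a ^ 4 * b * a ^ 4 * b * a
      = a * x * a * (f ^ (-2 : ℤ) * (a ^ 4 * (a * (x * (a * (f ^ (-2 : ℤ) * (a ^ 4 *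
          (a * (x * (a * (f ^ (-2 : ℤ) * a))))))))))) := by
        rw [hb]; simp only [mul_assoc]
    _ = a * x * a ^ 6 * x * a ^ 6 * x * a ^ 2 * f ^ (-6 : ℤ) := by
        have f1 (n : ℤ) (t : G) : f ^ n * (a * t) = a * (f ^ n * t) := by
          simpa using fp n 1 t
        simp only [fp, f1, fx, hcent _ ca, pow_two]
        group
    _ = a * (x * a⁻¹ * x) * a⁻¹ * x * a ^ 2 * f ^ (2 * q - 6) := by
        rw [ha6]
        simp only [mul_assoc, fp, fi, fx, ← zpow_add]
        congr 9
        ring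
    _ = a ^ 2 * x * (f ^ (-2 : ℤ) * (x * (a ^ 2 * f ^ (2 * q - 6)))) := by
        rw [← hb', hb]
        simp only [mul_assoc, fi, fx, pow_two a]
        group
    _ = a ^ 2 * x ^ 2 * a ^ 2 * f ^ (2 * q - 8) := by
        simp only [fx, fp, ← zpow_add, pow_two x]
        group
    _ = a ^ 4 * f ^ (2 * q - 7) := by
        rw [hx, mul_assoc, mul_assoc, ← zpow_one f, ← zpow_mul, fp]
        group

/-- The commutator identity in an arbitrary group satisfying the three relations. -/
lemma comm_eq {q : ℤ} (hx : x ^ 2 = f) (hy : y ^ 3 = f) (ha : (x * y) ^ 7 = f ^ q) :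
    w₁ x y * w₂ x y * (w₁ x y)⁻¹ * (w₂ x y)⁻¹ = (x * y) ^ 4 * f ^ (2 * q - 15) := by
  rw [comm_eq_word hx hy, word_collapse hx hy ha, mul_assoc, ← zpow_natCast f 8,
    ← zpow_neg, ← zpow_add]
  congr 2
  push_cast
  ring

end

theorem stmt18 (q : ℤ) :
    (w₁ (S₁ q) (S₂ q) * w₂ (S₁ q) (S₂ q) * (w₁ (S₁ q) (S₂ q))⁻¹ *
        (w₂ (S₁ q) (S₂ q))⁻¹ =
      (S₁ q * S₂ q) ^ 4 * F q ^ (2 * q - 15)) ∧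
    (w₁ (PresentedGroup.of 0 : PresentedGroup triangleRels) (PresentedGroup.of 1) *
        w₂ (PresentedGroup.of 0 : PresentedGroup triangleRels) (PresentedGroup.of 1) *
        (w₁ (PresentedGroup.of 0 : PresentedGroup triangleRels) (PresentedGroup.of 1))⁻¹ *
        (w₂ (PresentedGroup.of 0 : PresentedGroup triangleRels) (PresentedGroup.of 1))⁻¹ =
      ((PresentedGroup.of 0 : PresentedGroup triangleRels) * PresentedGroup.of 1) ^ 4) := by
  refine ⟨comm_eq (f := F q) ?_ ?_ ?_, ?_⟩
  · exact mul_inv_eq_one.mp (PresentedGroup.one_of_mem (rels := seifertRels q)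
      (x := FreeGroup.of 0 ^ 2 * (FreeGroup.of 2)⁻¹) (by simp [seifertRels]))
  · exact mul_inv_eq_one.mp (PresentedGroup.one_of_mem (rels := seifertRels q)
      (x := FreeGroup.of 1 ^ 3 * (FreeGroup.of 2)⁻¹) (by simp [seifertRels]))
  · have h : (S₁ q * S₂ q) ^ 7 * F q ^ (-q) = 1 :=
      PresentedGroup.one_of_mem (rels := seifertRels q)
        (x := (FreeGroup.of 0 * FreeGroup.of 1) ^ 7 * FreeGroup.of 2 ^ (-q))
        (by simp [seifertRels])
    rw [zpow_neg] at h
    exact mul_inv_eq_one.mp h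
  · have h := comm_eq (x := (PresentedGroup.of 0 : PresentedGroup triangleRels))
      (y := PresentedGroup.of 1) (f := 1) (q := 0)
      (PresentedGroup.one_of_mem (rels := triangleRels) (x := FreeGroup.of 0 ^ 2)
        (by simp [triangleRels]))
      (PresentedGroup.one_of_mem (rels := triangleRels) (x := FreeGroup.of 1 ^ 3)
        (by simp [triangleRels]))
      (PresentedGroup.one_of_mem (rels := triangleRels)
        (x := (FreeGroup.of 0 * FreeGroup.of 1) ^ 7) (by simp [triangleRels]))
    rwa [one_zpow, mul_one] at h
end

section
/- Let q ∈ ℤ and let G(q) = ⟨s₁, s₂, f | s₁² = f, s₂³ = f, (s₁s₂)⁷ = f^q⟩. For k, l ∈ ℤ set g = s₁s₂⁻¹s₁s₂s₁s₂⁻¹s₁s₂⁻¹s₁s₂ · f^k and h = s₂⁻¹s₁s₂s₁s₂⁻¹s₁s₂s₁s₂s₁ · f^l. Then (g,h) is an invertible generating pair of G(q) if and only if q = 6, k = -2 and l = -3 (in which case G(6) is the fundamental group of the Brieskorn homology sphere Σ(2,3,7)). -/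
set_option linter.unusedSimpArgs false

/-- The word `g` of the statement, for arbitrary elements `a, b, f` in place of `s₁, s₂, f`. -/
def gWord {G : Type*} [Group G] (a b f : G) (k : ℤ) : G :=
  a * b⁻¹ * a * b * a * b⁻¹ * a * b⁻¹ * a * b * f ^ k

/-- The word `h` of the statement, for arbitrary elements `a, b, f` in place of `s₁, s₂, f`. -/
def hWord {G : Type*} [Group G] (a b f : G) (l : ℤ) : G :=
  b⁻¹ * a * b * a * b⁻¹ * a * b * a * b * a * f ^ l

/-- The triple `(a, b, f)` satisfies the defining relations of `G(q)`. -/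
structure SftRel {G : Type*} [Group G] (a b f : G) (q : ℤ) : Prop where
  ha : a ^ 2 = f
  hb : b ^ 3 = f
  hab : (a * b) ^ 7 = f ^ q

namespace SftRel

variable {G : Type*} [Group G] {a b f : G} {q : ℤ}

theorem comm_a (H : SftRel a b f q) : Commute a f := H.ha ▸ (Commute.refl a).pow_right 2

theorem comm_b (H : SftRel a b f q) : Commute b f := H.hb ▸ (Commute.refl b).pow_right 3

/-! ### Rewriting words modulo the relations

Words are kept right-associated in the letters `a`, `b`, `b⁻¹`, preceded by one power of `f`. In the
names below `A` and `B` stand for `a⁻¹` and `b⁻¹`; the variants ending in `_mul` apply inside a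
longer word. -/

theorem a_f (H : SftRel a b f q) (n : ℤ) : a * f ^ n = f ^ n * a := (H.comm_a.zpow_right n).eq

theorem b_f (H : SftRel a b f q) (n : ℤ) : b * f ^ n = f ^ n * b := (H.comm_b.zpow_right n).eq

theorem B_f (H : SftRel a b f q) (n : ℤ) : b⁻¹ * f ^ n = f ^ n * b⁻¹ :=
  (H.comm_b.inv_left.zpow_right n).eq

theorem a_f_mul (H : SftRel a b f q) (n : ℤ) (w : G) : a * (f ^ n * w) = f ^ n * (a * w) := by
  rw [← mul_assoc, H.a_f, mul_assoc]

theorem b_f_mul (H : SftRel a b f q) (n : ℤ) (w : G) : b * (f ^ n * w) = f ^ n * (b * w) := by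
  rw [← mul_assoc, H.b_f, mul_assoc]

theorem B_f_mul (H : SftRel a b f q) (n : ℤ) (w : G) :
    b⁻¹ * (f ^ n * w) = f ^ n * (b⁻¹ * w) := by
  rw [← mul_assoc, H.B_f, mul_assoc]

theorem f_f_mul (m n : ℤ) (w : G) : f ^ m * (f ^ n * w) = f ^ (m + n) * w := by
  rw [← mul_assoc, zpow_add]

theorem a_a (H : SftRel a b f q) : a * a = f ^ (1 : ℤ) := by rw [zpow_one, ← H.ha, sq]

theorem a_a_mul (H : SftRel a b f q) (w : G) : a * (a * w) = f ^ (1 : ℤ) * w := by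
  rw [← mul_assoc, H.a_a]

theorem A_eq (H : SftRel a b f q) : a⁻¹ = f ^ (-1 : ℤ) * a := by
  rw [zpow_neg, zpow_one, ← H.ha]; group

theorem b_b (H : SftRel a b f q) : b * b = f ^ (1 : ℤ) * b⁻¹ := by
  rw [zpow_one, ← H.hb, pow_succ, mul_inv_cancel_right, sq]

theorem b_b_mul (H : SftRel a b f q) (w : G) : b * (b * w) = f ^ (1 : ℤ) * (b⁻¹ * w) := by
  rw [← mul_assoc, H.b_b, mul_assoc]

theorem B_B (H : SftRel a b f q) : b⁻¹ * b⁻¹ = f ^ (-1 : ℤ) * b := by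
  rw [zpow_neg, zpow_one, ← H.hb]; group

theorem B_B_mul (H : SftRel a b f q) (w : G) : b⁻¹ * (b⁻¹ * w) = f ^ (-1 : ℤ) * (b * w) := by
  rw [← mul_assoc, H.B_B, mul_assoc]

/-- The relation `(ab)⁷ = f^q` as a length-reducing rule: `(ab)⁴ = f^(q-3) (b⁻¹a)³`. -/
theorem ab4_mul (H : SftRel a b f q) (w : G) :
    a * (b * (a * (b * (a * (b * (a * (b * w))))))) =
      f ^ (q - 3) * (b⁻¹ * (a * (b⁻¹ * (a * (b⁻¹ * (a * w)))))) := by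
  have h : (a * b) ^ 4 * (a * b) ^ 3 = f ^ q := by rw [← H.hab, ← pow_add]
  have e : a * (b * (a * (b * (a * (b * (a * b)))))) =
      f ^ (q - 3) * (b⁻¹ * (a * (b⁻¹ * (a * (b⁻¹ * a))))) := by
    apply mul_right_cancel (b := (a * b) ^ 3)
    simp only [pow_succ, pow_zero, one_mul, mul_assoc] at h
    simp only [pow_succ, pow_zero, one_mul, mul_assoc, h, H.a_f, H.B_f, H.b_f, H.a_f_mul,
      H.B_f_mul, H.b_f_mul, f_f_mul, H.a_a_mul, inv_mul_cancel, inv_mul_cancel_left,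
      mul_one, ← zpow_add]
    congr 1; ring
  simpa only [mul_assoc] using congrArg (· * w) e

/-- The inverse form of the rule `ab4_mul`: `(b⁻¹a)⁴ = f^(4-q) (ab)³`. -/
theorem Ba4_mul (H : SftRel a b f q) (w : G) :
    b⁻¹ * (a * (b⁻¹ * (a * (b⁻¹ * (a * (b⁻¹ * (a * w))))))) =
      f ^ (4 - q) * (a * (b * (a * (b * (a * (b * w)))))) := by
  have e : b⁻¹ * (a * (b⁻¹ * (a * (b⁻¹ * (a * (b⁻¹ * a)))))) =
      f ^ (4 - q) * (a * (b * (a * (b * (a * b))))) := by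
    apply mul_right_cancel (b := (a * b) ^ 4)
    simp only [pow_succ, pow_zero, one_mul, mul_assoc, H.ab4_mul, H.a_f, H.B_f, H.b_f, H.a_f_mul,
      H.B_f_mul, H.b_f_mul, f_f_mul, H.a_a, H.a_a_mul, inv_mul_cancel, inv_mul_cancel_left,
      mul_inv_cancel_left, mul_inv_cancel, ← zpow_add, mul_one]
    congr 1; ring
  simpa only [mul_assoc] using congrArg (· * w) e

/-! ### The words `g` and `h` -/

/-- Conjugation by `b a b⁻¹`, a lift of an involution of the triangle group, inverts `g` up to a
power of `f`. -/
theorem conj_gWord (H : SftRel a b f q) (k : ℤ) :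
    b * a * b⁻¹ * gWord a b f k * (b * a * b⁻¹)⁻¹ =
      f ^ (16 - 2 * q + 2 * k) * (gWord a b f k)⁻¹ := by
  apply eq_mul_inv_of_mul_eq
  simp only [gWord, mul_assoc, H.ab4_mul, H.Ba4_mul, H.a_f, H.B_f, H.b_f, H.a_f_mul,
    H.B_f_mul, H.b_f_mul, f_f_mul, H.a_a, H.a_a_mul, inv_mul_cancel, inv_mul_cancel_left,
    H.b_b, H.b_b_mul, H.B_B, H.B_B_mul, mul_one, mul_inv_rev, inv_inv, H.A_eq, ← zpow_neg,
    mul_inv_cancel_left, mul_inv_cancel, ← zpow_add]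
  congr 1; ring

/-- The element `b a b⁻¹` of `conj_gWord` also inverts `h` up to a power of `f`. -/
theorem conj_hWord (H : SftRel a b f q) (l : ℤ) :
    b * a * b⁻¹ * hWord a b f l * (b * a * b⁻¹)⁻¹ =
      f ^ (2 * q - 6 + 2 * l) * (hWord a b f l)⁻¹ := by
  apply eq_mul_inv_of_mul_eq
  simp only [hWord, mul_assoc, H.ab4_mul, H.Ba4_mul, H.a_f, H.B_f, H.b_f, H.a_f_mul,
    H.B_f_mul, H.b_f_mul, f_f_mul, H.a_a, H.a_a_mul, inv_mul_cancel, inv_mul_cancel_left,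
    H.b_b, H.b_b_mul, H.B_B, H.B_B_mul, mul_one, mul_inv_rev, inv_inv, H.A_eq, ← zpow_neg,
    mul_inv_cancel_left, mul_inv_cancel, ← zpow_add]
  congr 1; ring

theorem commutator_sq (H : SftRel a b f 6) (g h : G) (hg : g = gWord a b f (-2))
    (hh : h = hWord a b f (-3)) : (h * g * h⁻¹ * g⁻¹) ^ 2 = (a * b)⁻¹ := by
  apply eq_inv_of_mul_eq_one_left
  subst hg hh
  simp only [gWord, hWord, pow_two, mul_assoc, H.ab4_mul, H.Ba4_mul, H.a_f, H.B_f, H.b_f,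
    H.a_f_mul, H.B_f_mul, H.b_f_mul, f_f_mul, H.a_a, H.a_a_mul, inv_mul_cancel,
    inv_mul_cancel_left, H.b_b, H.b_b_mul, H.B_B, H.B_B_mul, mul_one, mul_inv_rev, inv_inv,
    H.A_eq, ← zpow_neg, mul_inv_cancel_left, mul_inv_cancel, ← zpow_add]
  norm_num

theorem b_eq_word (H : SftRel a b f 6) (g h : G) (hg : g = gWord a b f (-2))
    (hh : h = hWord a b f (-3)) :
    g⁻¹ * h⁻¹ * h⁻¹ * g⁻¹ * h * g * h⁻¹ * g⁻¹ * g⁻¹ = f⁻¹ * b := by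
  subst hg hh
  simp only [gWord, hWord, pow_two, mul_assoc, H.ab4_mul, H.Ba4_mul, H.a_f, H.B_f, H.b_f,
    H.a_f_mul, H.B_f_mul, H.b_f_mul, f_f_mul, H.a_a, H.a_a_mul, inv_mul_cancel,
    inv_mul_cancel_left, H.b_b, H.b_b_mul, H.B_B, H.B_B_mul, mul_one, mul_inv_rev, inv_inv,
    H.A_eq, ← zpow_neg, mul_inv_cancel_left, mul_inv_cancel, ← zpow_add]
  norm_num

/-- For `q = 6`, `k = -2`, `l = -3` the subgroup generated by `g` and `h` contains `ab` and `f⁻¹b`,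
hence `af`, hence `(af)² (f⁻¹b)³ = f³ f⁻² = f`. -/
theorem mem_closure (H : SftRel a b f 6) :
    a ∈ Subgroup.closure {gWord a b f (-2), hWord a b f (-3)} ∧
      b ∈ Subgroup.closure {gWord a b f (-2), hWord a b f (-3)} ∧
      f ∈ Subgroup.closure {gWord a b f (-2), hWord a b f (-3)} := by
  set g := gWord a b f (-2) with hg
  set h := hWord a b f (-3) with hh
  set K := Subgroup.closure {g, h} with hK
  have mg : g ∈ K := Subgroup.subset_closure (by simp)
  have mh : h ∈ K := Subgroup.subset_closure (by simp)
  have mab : a * b ∈ K := by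
    rw [← inv_mem_iff, ← H.commutator_sq g h hg hh]
    exact K.pow_mem (K.mul_mem (K.mul_mem (K.mul_mem mh mg) (K.inv_mem mh)) (K.inv_mem mg)) 2
  have mb : f⁻¹ * b ∈ K := by
    rw [← H.b_eq_word g h hg hh]
    have mg' := K.inv_mem mg
    have mh' := K.inv_mem mh
    exact K.mul_mem (K.mul_mem (K.mul_mem (K.mul_mem (K.mul_mem (K.mul_mem (K.mul_mem
      (K.mul_mem mg' mh') mh') mg') mh) mg) mh') mg') mg'
  have ma : a * f ∈ K := by
    have : a * f = a * b * (f⁻¹ * b)⁻¹ := by group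
    rw [this]
    exact K.mul_mem mab (K.inv_mem mb)
  have mf : f ∈ K := by
    have h3 : (a * f) ^ 2 * (f⁻¹ * b) ^ 3 = f := by
      rw [H.comm_a.mul_pow, H.comm_b.inv_right.symm.mul_pow, H.ha, H.hb]
      group
    rw [← h3]
    exact K.mul_mem (K.pow_mem ma 2) (K.pow_mem mb 3)
  refine ⟨?_, ?_, mf⟩
  · simpa using K.mul_mem ma (K.inv_mem mf)
  · simpa using K.mul_mem mf mb

/-- The homomorphism from `G(q)` determined by a triple satisfying its relations. -/
def lift (H : SftRel a b f q) : Sft q →* G :=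
  PresentedGroup.toGroup (f := ![a, b, f]) (by
    rintro r (rfl | rfl | rfl)
    · simp [H.ha]
    · simp [H.hb]
    · simp [H.hab])

@[simp] theorem lift_S₁ (H : SftRel a b f q) : H.lift (S₁ q) = a := by simp [lift, S₁]

@[simp] theorem lift_S₂ (H : SftRel a b f q) : H.lift (S₂ q) = b := by simp [lift, S₂]

@[simp] theorem lift_F (H : SftRel a b f q) : H.lift (F q) = f := by simp [lift, F]

end SftRel

/-! ### The presented group -/

theorem sftRel (q : ℤ) : SftRel (S₁ q) (S₂ q) (F q) q where
  ha := by
    have := PresentedGroup.one_of_mem (rels := seifertRels q)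
      (x := FreeGroup.of 0 ^ 2 * (FreeGroup.of 2)⁻¹) (by simp [seifertRels])
    rw [map_mul, map_pow, map_inv] at this
    exact mul_inv_eq_one.mp this
  hb := by
    have := PresentedGroup.one_of_mem (rels := seifertRels q)
      (x := FreeGroup.of 1 ^ 3 * (FreeGroup.of 2)⁻¹) (by simp [seifertRels])
    rw [map_mul, map_pow, map_inv] at this
    exact mul_inv_eq_one.mp this
  hab := by
    have := PresentedGroup.one_of_mem (rels := seifertRels q)
      (x := (FreeGroup.of 0 * FreeGroup.of 1) ^ 7 * FreeGroup.of 2 ^ (-q)) (by simp [seifertRels])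
    rw [map_mul, map_pow, map_mul, map_zpow, zpow_neg] at this
    exact mul_inv_eq_one.mp this

/-- Since `f = s₁²`, homomorphisms out of `G(q)` are determined by the images of `s₁` and `s₂`. -/
theorem sft_hom_ext {q : ℤ} {G : Type*} [Group G] {φ ψ : Sft q →* G}
    (h₁ : φ (S₁ q) = ψ (S₁ q)) (h₂ : φ (S₂ q) = ψ (S₂ q)) : φ = ψ := by
  refine PresentedGroup.ext fun i => ?_
  have h₃ : φ (F q) = ψ (F q) := by rw [← (sftRel q).ha, map_pow, map_pow, h₁]
  fin_cases i
  exacts [h₁, h₂, h₃]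

theorem closure_eq_top : Subgroup.closure
    {gWord (S₁ 6) (S₂ 6) (F 6) (-2), hWord (S₁ 6) (S₂ 6) (F 6) (-3)} = ⊤ := by
  obtain ⟨h₁, h₂, h₃⟩ := (sftRel 6).mem_closure
  rw [eq_top_iff, ← PresentedGroup.closure_range_of, Subgroup.closure_le]
  rintro _ ⟨i, rfl⟩
  fin_cases i
  exacts [h₁, h₂, h₃]

/-! ### The fiber has infinite order -/

/-- Image of `s₁` in a representation of a central extension of the triangle group. The middle
`6 × 6` block is an involution of `PSL(2,7)` acting on the first homology of the Klein quartic; the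
first row and the last column are cocycles with values in the dual of this module and in the module
itself, whose cup product is the class of the extension. -/
def kA : Matrix (Fin 8) (Fin 8) ℤ :=
  !![1, 0, 0, 0, 0, 1, 0, 0; 0, -1, 0, 0, 0, 0, 0, 1; 0, 0, 0, 0, 1, -1, 0, 0;
    0, 0, 0, -1, 0, 0, 0, 0; 0, 0, 1, 0, 0, -1, 0, 0; 0, 0, 0, 0, 0, -1, 0, 0;
    0, 0, 0, -1, 0, -1, 1, 0; 0, 0, 0, 0, 0, 0, 0, 1]

/-- Image of `s₂` in the representation of `kA`; the cocycles are normalised to vanish on `s₂`. -/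
def kB : Matrix (Fin 8) (Fin 8) ℤ :=
  !![1, 0, 0, 0, 0, 0, 0, 0; 0, 0, 0, 1, 0, 0, 0, 0; 0, 1, 0, 0, 0, 0, 0, 0;
    0, 0, 1, 0, 0, 0, 0, 0; 0, 0, 0, 0, 0, 0, 1, 0; 0, 0, 0, 0, 1, 0, 0, 0;
    0, 0, 0, 0, 0, 1, 0, 0; 0, 0, 0, 0, 0, 0, 0, 1]

/-- The corner matrix unit, which spans the central direction of the representation. -/
def kN : Matrix (Fin 8) (Fin 8) ℤ := Matrix.single 0 7 1

theorem kA_sq : kA * kA = 1 := by decide +kernel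

theorem kB_cube : kB * (kB * kB) = 1 := by decide +kernel

theorem kAB : (kA * kB) ^ 7 = 1 + 2 * kN := by
  have h : kA * kB * (kA * kB) * (kA * kB) * (kA * kB) * (kA * kB) * (kA * kB) * (kA * kB) =
      1 + 2 * kN := by decide +kernel
  simpa [pow_succ] using h

theorem kN_sq : kN * kN = 0 := by decide +kernel

theorem kA_kN : kA * kN = kN * kA := by decide +kernel

theorem kB_kN : kB * kN = kN * kB := by decide +kernel

/-- Entrywise cast of integer matrices to rational ones. -/
abbrev toQ : Matrix (Fin 8) (Fin 8) ℤ →+* Matrix (Fin 8) (Fin 8) ℚ :=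
  (Int.castRingHom ℚ).mapMatrix

/-- `kA` as an invertible rational matrix. -/
def uA : (Matrix (Fin 8) (Fin 8) ℚ)ˣ where
  val := toQ kA
  inv := toQ kA
  val_inv := by rw [← map_mul, kA_sq, map_one]
  inv_val := by rw [← map_mul, kA_sq, map_one]

/-- `kB` as an invertible rational matrix. -/
def uB : (Matrix (Fin 8) (Fin 8) ℚ)ˣ where
  val := toQ kB
  inv := toQ (kB * kB)
  val_inv := by rw [← map_mul, kB_cube, map_one]
  inv_val := by rw [← map_mul, mul_assoc, kB_cube, map_one]

theorem toQ_kN_sq : toQ kN * toQ kN = 0 := by rw [← map_mul, kN_sq, map_zero]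

/-- The one-parameter group `w ↦ 1 + w N` of unipotent matrices commuting with `kA` and `kB`. -/
def uT : Multiplicative ℚ →* (Matrix (Fin 8) (Fin 8) ℚ)ˣ :=
  MonoidHom.toHomUnits
    { toFun := fun w => 1 + w.toAdd • toQ kN
      map_one' := by simp
      map_mul' := fun x y => by
        rw [toAdd_mul, add_smul, mul_add, mul_one, add_mul, one_mul, smul_mul_smul_comm, toQ_kN_sq,
          smul_zero, add_zero, add_assoc] }

theorem uT_val (w : Multiplicative ℚ) : (uT w).val = 1 + w.toAdd • toQ kN := rfl

theorem uA_uT (w : Multiplicative ℚ) : Commute uA (uT w) := by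
  apply Units.ext
  rw [Units.val_mul, Units.val_mul, uT_val, mul_add, add_mul, mul_smul_comm, smul_mul_assoc,
    mul_one, one_mul]
  show _ + _ • (toQ kA * toQ kN) = _ + _ • (toQ kN * toQ kA)
  rw [← map_mul, ← map_mul, kA_kN]

theorem uB_uT (w : Multiplicative ℚ) : Commute uB (uT w) := by
  apply Units.ext
  rw [Units.val_mul, Units.val_mul, uT_val, mul_add, add_mul, mul_smul_comm, smul_mul_assoc,
    mul_one, one_mul]
  show _ + _ • (toQ kB * toQ kN) = _ + _ • (toQ kN * toQ kB)
  rw [← map_mul, ← map_mul, kB_kN]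

theorem uT_injective : Function.Injective uT := by
  intro x y h
  have h' := congrArg (fun M : (Matrix (Fin 8) (Fin 8) ℚ)ˣ => M.val 0 7) h
  simpa [uT_val, kN] using h'

theorem uA_sq : uA ^ 2 = 1 := by
  rw [sq]; apply Units.ext; exact (map_mul toQ _ _).symm.trans (by rw [kA_sq, map_one]; rfl)

theorem uB_cube : uB ^ 3 = 1 := by
  apply Units.ext
  show toQ kB ^ 3 = 1
  rw [pow_succ', sq, ← map_mul, ← map_mul, kB_cube, map_one]

theorem uAB : (uA * uB) ^ 7 = uT (.ofAdd 2) := by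
  apply Units.ext
  show (toQ kA * toQ kB) ^ 7 = 1 + (2 : ℚ) • toQ kN
  rw [← map_mul, ← map_pow, kAB, map_add, map_mul, map_one, map_ofNat, two_smul, two_mul]

/-- A representation of `G(q)` in which `f` is the unipotent matrix `1 + c N`, `c = 12 / (6q - 35)`.
The generators are `kA` and `kB` corrected by `1 + (c/2) N` and `1 + (c/3) N`; as `(kA kB)⁷ = 1 + 2N`,
the last relation reads `2 + 7 (c/2 + c/3) = q c`, which fixes `c`. -/
theorem nilRel (q : ℤ) :
    SftRel (uA * uT (.ofAdd (6 / (6 * q - 35)))) (uB * uT (.ofAdd (4 / (6 * q - 35))))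
      (uT (.ofAdd (12 / (6 * q - 35)))) q := by
  have hq : (6 * q - 35 : ℚ) ≠ 0 := by
    have : (6 * q - 35 : ℤ) ≠ 0 := by omega
    exact_mod_cast this
  refine ⟨?_, ?_, ?_⟩
  · rw [(uA_uT _).mul_pow, uA_sq, one_mul, ← map_pow, ← ofAdd_nsmul]
    congr 2; simp; ring
  · rw [(uB_uT _).mul_pow, uB_cube, one_mul, ← map_pow, ← ofAdd_nsmul]
    congr 2; simp; ring
  · rw [mul_assoc, ← mul_assoc (uT _) uB, ← (uB_uT _).eq, mul_assoc uB, ← mul_assoc, ← map_mul,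
      ((uA_uT _).mul_left (uB_uT _)).mul_pow, uAB, ← map_pow, ← map_mul, ← map_zpow,
      ← ofAdd_add, ← ofAdd_nsmul, ← ofAdd_add, ← ofAdd_zsmul]
    congr 2; simp; field_simp; ring

/-- The fiber `f` has infinite order in `G(q)`. -/
theorem F_zpow_inj {q m n : ℤ} (h : F q ^ m = F q ^ n) : m = n := by
  have h' := congrArg (nilRel q).lift h
  have hq : (6 * q - 35 : ℚ) ≠ 0 := by
    have : (6 * q - 35 : ℤ) ≠ 0 := by omega
    exact_mod_cast this
  rw [map_zpow, map_zpow, SftRel.lift_F, ← map_zpow uT, ← map_zpow uT, ← ofAdd_zsmul,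
    ← ofAdd_zsmul] at h'
  have h2 := Multiplicative.ofAdd.injective (uT_injective h')
  simpa [hq] using h2

/-! ### Automorphisms inverting a generating pair -/

/-- `G(q)` maps to the cyclic group of order `|35 - 6q|` (its abelianization) by
`s₁, s₂, f ↦ 3, 2, 6`. -/
theorem homologyRel (q : ℤ) : SftRel (G := Multiplicative (ZMod (35 - 6 * q).natAbs))
    (.ofAdd 3) (.ofAdd 2) (.ofAdd 6) q := by
  have h0 : ((35 - 6 * q : ℤ) : ZMod (35 - 6 * q).natAbs) = 0 := by
    rw [ZMod.intCast_zmod_eq_zero_iff_dvd]; exact Int.natAbs_dvd.mpr dvd_rfl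
  push_cast at h0
  refine ⟨?_, ?_, ?_⟩
  · rw [← ofAdd_nsmul]; congr 1; simp; norm_num
  · rw [← ofAdd_nsmul]; congr 1; simp; norm_num
  · rw [← ofAdd_add, ← ofAdd_nsmul, ← ofAdd_zsmul]; congr 1; simp; linear_combination h0

/-- An endomorphism `α` of `G(q)` which on a generating pair agrees with conjugation by `x` up to
powers of `f` is conjugation by `x`. Indeed `α s₁` and `α s₂` are the conjugates of `s₁` and `s₂`
times `f^i` and `f^j`, and since `f` has infinite order the relations force `2i = 3j` and
`7(i + j) = 2iq`, so `i = j = 0` because `6q ≠ 35`. -/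
theorem aut_eq_conj {q : ℤ} {g h x : Sft q} (hgen : Subgroup.closure {g, h} = ⊤)
    (α : Sft q →* Sft q) {m n : ℤ} (hg : x * g * x⁻¹ = F q ^ m * α g)
    (hh : x * h * x⁻¹ = F q ^ n * α h) (y : Sft q) : α y = x * y * x⁻¹ := by
  have H := sftRel q
  have cF : ∀ y : Sft q, Commute y (F q) := by
    have : (MulAut.conj (F q)).toMonoidHom = MonoidHom.id _ := sft_hom_ext
      (by simp [← H.comm_a.eq]) (by simp [← H.comm_b.eq])
    intro y
    have := DFunLike.congr_fun this y
    exact (mul_inv_eq_iff_eq_mul.mp this).symm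
  have key : ∀ y : Sft q, ∃ i : ℤ, α y = x * y * x⁻¹ * F q ^ i := by
    intro y
    have hy : y ∈ Subgroup.closure {g, h} := hgen ▸ Subgroup.mem_top y
    induction hy using Subgroup.closure_induction with
    | mem z hz =>
      rcases hz with rfl | rfl
      · exact ⟨-m, by rw [hg, ((cF _).zpow_right (-m)).eq, zpow_neg, inv_mul_cancel_left]⟩
      · exact ⟨-n, by rw [hh, ((cF _).zpow_right (-n)).eq, zpow_neg, inv_mul_cancel_left]⟩
    | one => exact ⟨0, by simp⟩
    | mul y z _ _ hy hz =>
      obtain ⟨i, hi⟩ := hy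
      obtain ⟨j, hj⟩ := hz
      refine ⟨i + j, ?_⟩
      rw [map_mul, hi, hj, mul_assoc (x * y * x⁻¹), ← mul_assoc (F q ^ i),
        ← ((cF _).zpow_right i).eq, zpow_add]
      group
    | inv y _ hy =>
      obtain ⟨i, hi⟩ := hy
      refine ⟨-i, ?_⟩
      rw [map_inv, hi, mul_inv_rev, ← zpow_neg, ← ((cF _).zpow_right _).eq]
      group
  obtain ⟨i, hi⟩ := key (S₁ q)
  obtain ⟨j, hj⟩ := key (S₂ q)
  have conjF : ∀ r : ℤ, x * F q ^ r * x⁻¹ = F q ^ r := fun r => by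
    rw [((cF x).zpow_right r).eq, mul_inv_cancel_right]
  have e₁ : α (F q) = F q ^ (1 + 2 * i) := by
    rw [← H.ha, map_pow, hi, ((cF _).zpow_right i).mul_pow, conj_pow, H.ha, ← zpow_one (F q),
      conjF]
    group
  have e₂ : α (F q) = F q ^ (1 + 3 * j) := by
    rw [← H.hb, map_pow, hj, ((cF _).zpow_right j).mul_pow, conj_pow, H.hb, ← zpow_one (F q),
      conjF]
    group
  have e₃ : α (F q) ^ q = F q ^ (q + 7 * (i + j)) := by
    have : x * S₁ q * x⁻¹ * F q ^ i * (x * S₂ q * x⁻¹ * F q ^ j) =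
        x * (S₁ q * S₂ q) * x⁻¹ * F q ^ (i + j) := by
      rw [mul_assoc (x * S₁ q * x⁻¹), ← mul_assoc (F q ^ i), ← ((cF _).zpow_right i).eq, zpow_add]
      group
    rw [← map_zpow, ← H.hab, map_pow, map_mul, hi, hj, this, ((cF _).zpow_right _).mul_pow,
      conj_pow, H.hab, conjF, zpow_add (F q) q, mul_comm 7, zpow_mul]
    rfl
  have f₁ : 2 * i = 3 * j := by
    have := F_zpow_inj (e₁.symm.trans e₂)
    omega
  have f₂ : (1 + 2 * i) * q = q + 7 * (i + j) := by
    rw [e₁, ← zpow_mul] at e₃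
    exact F_zpow_inj e₃
  obtain ⟨t, rfl⟩ : ∃ t, i = 3 * t := ⟨i / 3, by omega⟩
  obtain rfl : j = 2 * t := by omega
  obtain rfl : t = 0 := by
    have : t * (6 * q - 35) = 0 := by linear_combination f₂
    rcases mul_eq_zero.mp this with h | h
    · exact h
    · omega
  have : α = (MulAut.conj x).toMonoidHom := sft_hom_ext (by simp [hi]) (by simp [hj])
  rw [this]; rfl

/-- If an inner automorphism inverts a generating pair then `q = 6`: it acts trivially on the
abelianization, a cyclic group of odd order `|35 - 6q|`, whose generators are thus equal to their
inverses. -/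
theorem eq_six {q : ℤ} {g h x : Sft q} (hgen : Subgroup.closure {g, h} = ⊤)
    (hg : x * g * x⁻¹ = g⁻¹) (hh : x * h * x⁻¹ = h⁻¹) : q = 6 := by
  set φ := (homologyRel q).lift with hφ
  have h0 : ((35 - 6 * q : ℤ) : ZMod (35 - 6 * q).natAbs) = 0 := by
    rw [ZMod.intCast_zmod_eq_zero_iff_dvd]; exact Int.natAbs_dvd.mpr dvd_rfl
  push_cast at h0
  have kill : ∀ y, x * y * x⁻¹ = y⁻¹ → φ y = 1 := by
    intro y hy
    have h1 := congrArg φ hy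
    rw [map_mul, map_mul, map_inv, map_inv, mul_comm (φ x), mul_inv_cancel_right] at h1
    have h2 : (φ y).toAdd = - (φ y).toAdd := congrArg Multiplicative.toAdd h1
    -- `2 (18 - 3q) = 1` modulo `35 - 6q`, so `2` is invertible.
    have h3 : (φ y).toAdd = 0 := by
      linear_combination (18 - 3 * (q : ZMod (35 - 6 * q).natAbs)) * h2 - (φ y).toAdd * h0
    exact h3
  have ker : φ.ker = ⊤ := by
    rw [eq_top_iff, ← hgen, Subgroup.closure_le]
    rintro y (rfl | rfl)
    exacts [kill _ hg, kill _ hh]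
  have k₁ : φ (S₁ q) = 1 := by rw [← MonoidHom.mem_ker, ker]; trivial
  have k₂ : φ (S₂ q) = 1 := by rw [← MonoidHom.mem_ker, ker]; trivial
  rw [hφ, SftRel.lift_S₁] at k₁
  rw [hφ, SftRel.lift_S₂] at k₂
  have k₁' : (3 : ZMod (35 - 6 * q).natAbs) = 0 := k₁
  have k₂' : (2 : ZMod (35 - 6 * q).natAbs) = 0 := k₂
  have k₃ : ((1 : ℕ) : ZMod (35 - 6 * q).natAbs) = 0 := by
    push_cast; linear_combination k₁' - k₂'
  rw [ZMod.natCast_eq_zero_iff] at k₃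
  have := Nat.dvd_one.mp k₃
  omega

theorem stmt19 (q k l : ℤ) :
    (let g := S₁ q * (S₂ q)⁻¹ * S₁ q * S₂ q * S₁ q * (S₂ q)⁻¹ * S₁ q * (S₂ q)⁻¹ *
        S₁ q * S₂ q * F q ^ k
     let h := (S₂ q)⁻¹ * S₁ q * S₂ q * S₁ q * (S₂ q)⁻¹ * S₁ q * S₂ q * S₁ q *
        S₂ q * S₁ q * F q ^ l
     Subgroup.closure {g, h} = ⊤ ∧ ∃ α : Sft q ≃* Sft q, α g = g⁻¹ ∧ α h = h⁻¹) ↔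
      (q = 6 ∧ k = -2 ∧ l = -3) := by
  show (Subgroup.closure {gWord (S₁ q) (S₂ q) (F q) k, hWord (S₁ q) (S₂ q) (F q) l} = ⊤ ∧
    ∃ α : Sft q ≃* Sft q,
      α (gWord (S₁ q) (S₂ q) (F q) k) = (gWord (S₁ q) (S₂ q) (F q) k)⁻¹ ∧
      α (hWord (S₁ q) (S₂ q) (F q) l) = (hWord (S₁ q) (S₂ q) (F q) l)⁻¹) ↔ _
  have cg := (sftRel q).conj_gWord k
  have ch := (sftRel q).conj_hWord l
  constructor
  · rintro ⟨hgen, α, hg, hh⟩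
    have hconj := aut_eq_conj hgen α.toMonoidHom (cg.trans (congrArg _ hg.symm))
      (ch.trans (congrArg _ hh.symm))
    have ig := (hconj _).symm.trans hg
    have ih := (hconj _).symm.trans hh
    have hq := eq_six hgen ig ih
    have hk := F_zpow_inj ((mul_eq_right.mp (cg.symm.trans ig)).trans (zpow_zero _).symm)
    have hl := F_zpow_inj ((mul_eq_right.mp (ch.symm.trans ih)).trans (zpow_zero _).symm)
    omega
  · rintro ⟨rfl, rfl, rfl⟩
    refine ⟨closure_eq_top, MulAut.conj (S₂ 6 * S₁ 6 * (S₂ 6)⁻¹), ?_, ?_⟩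
    · rw [MulAut.conj_apply, cg]
      norm_num
    · rw [MulAut.conj_apply, ch]
      norm_num
end
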